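/- Let G(λ) ∈ F(λ)^{p×m} have normal rank r, finite Smith–McMillan form Diag(ε_1(λ)/ψ_1(λ),…,ε_r(λ)/ψ_r(λ), 0) and invariant orders at infinity q_1 ≤ … ≤ q_r. Then the sum μ(G(λ)) of all right and left minimal indices of G(λ) satisfies μ(G(λ)) = Σ_{i=1}^r deg(ψ_i(λ)) − Σ_{i=1}^r deg(ε_i(λ)) − Σ_{i=1}^r q_i. -/

import Mathlib

open Polynomial Matrix

set_option synthInstance.maxHeartbeats 1000000

noncomputable section

variable {F : Type*} [Field F]

/-- The natural embedding of a polynomial matrix into the rational functions. -/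
def toRF {a b : Type*} (M : Matrix a b (Polynomial F)) : Matrix a b (RatFunc F) :=
  M.map (algebraMap (Polynomial F) (RatFunc F))

/-- A rational function is proper if the degree of its numerator is at most that of its
denominator. -/
def IsProperRat (r : RatFunc F) : Prop := r.num.degree ≤ r.denom.degree

/-- Degree (as a natural number) of the `j`-th column of a polynomial matrix. -/
def colDegNat {a : Type*} [Fintype a] {l : ℕ} (N : Matrix a (Fin l) (Polynomial F))
    (j : Fin l) : ℕ :=
  Finset.univ.sup fun i => (N i j).natDegree

/-- The order of a polynomial matrix: the sum of its column degrees. -/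
def matOrder {a : Type*} [Fintype a] {l : ℕ} (N : Matrix a (Fin l) (Polynomial F)) : ℕ :=
  ∑ j, colDegNat N j

/-- The multiset of column degrees of a polynomial matrix. -/
def colDegs {a : Type*} [Fintype a] {l : ℕ} (N : Matrix a (Fin l) (Polynomial F)) : Multiset ℕ :=
  Finset.univ.val.map fun j => colDegNat N j

/-- The columns of the polynomial matrix `N`, regarded as rational vectors, form a basis of
the right null-space of the rational matrix `M`. -/
def IsRightPolyBasis {a b : Type*} [Fintype a] [Fintype b] {l : ℕ}
    (M : Matrix a b (RatFunc F)) (N : Matrix b (Fin l) (Polynomial F)) : Prop :=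
  LinearIndependent (RatFunc F) (fun j : Fin l => (toRF N)ᵀ j) ∧
    Submodule.span (RatFunc F) (Set.range fun j : Fin l => (toRF N)ᵀ j) =
      LinearMap.ker M.mulVecLin

/-- The columns of the polynomial matrix `N` form a basis of the left null-space of `M`. -/
def IsLeftPolyBasis {a b : Type*} [Fintype a] [Fintype b] {l : ℕ}
    (M : Matrix a b (RatFunc F)) (N : Matrix a (Fin l) (Polynomial F)) : Prop :=
  LinearIndependent (RatFunc F) (fun j : Fin l => (toRF N)ᵀ j) ∧
    Submodule.span (RatFunc F) (Set.range fun j : Fin l => (toRF N)ᵀ j) =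
      LinearMap.ker M.vecMulLinear

/-- A right minimal basis: a right polynomial basis of least order. -/
def IsRightMinimalBasis {a b : Type*} [Fintype a] [Fintype b] {l : ℕ}
    (M : Matrix a b (RatFunc F)) (N : Matrix b (Fin l) (Polynomial F)) : Prop :=
  IsRightPolyBasis M N ∧
    ∀ (l' : ℕ) (N' : Matrix b (Fin l') (Polynomial F)), IsRightPolyBasis M N' →
      matOrder N ≤ matOrder N'

/-- A left minimal basis: a left polynomial basis of least order. -/
def IsLeftMinimalBasis {a b : Type*} [Fintype a] [Fintype b] {l : ℕ}
    (M : Matrix a b (RatFunc F)) (N : Matrix a (Fin l) (Polynomial F)) : Prop :=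
  IsLeftPolyBasis M N ∧
    ∀ (l' : ℕ) (N' : Matrix a (Fin l') (Polynomial F)), IsLeftPolyBasis M N' →
      matOrder N ≤ matOrder N'

/-- `s` is the multiset of right minimal indices of `M`. -/
def HasRightMinimalIndices {a b : Type*} [Fintype a] [Fintype b]
    (M : Matrix a b (RatFunc F)) (s : Multiset ℕ) : Prop :=
  ∃ (l : ℕ) (N : Matrix b (Fin l) (Polynomial F)), IsRightMinimalBasis M N ∧ colDegs N = s

/-- `s` is the multiset of left minimal indices of `M`. -/
def HasLeftMinimalIndices {a b : Type*} [Fintype a] [Fintype b]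
    (M : Matrix a b (RatFunc F)) (s : Multiset ℕ) : Prop :=
  ∃ (l : ℕ) (N : Matrix a (Fin l) (Polynomial F)), IsLeftMinimalBasis M N ∧ colDegs N = s

/-- A rational matrix is proper if all its entries are proper. -/
def ProperMat {a b : Type*} (M : Matrix a b (RatFunc F)) : Prop := ∀ i j, IsProperRat (M i j)

/-- A proper rational matrix is biproper if it is invertible with proper inverse. -/
def Biproper {a b : Type*} [Fintype a] [Fintype b] [DecidableEq a] [DecidableEq b]
    (B : Matrix a b (RatFunc F)) : Prop :=
  ProperMat B ∧ ∃ B' : Matrix b a (RatFunc F), ProperMat B' ∧ B * B' = 1 ∧ B' * B = 1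

/-- A square polynomial matrix is unimodular if its determinant is a unit. -/
def Unimodular {a : Type*} [Fintype a] [DecidableEq a] (U : Matrix a a (Polynomial F)) : Prop :=
  IsUnit U.det

/-- The diagonal rational matrix `Diag((1/λ)^{q₁}, …, (1/λ)^{q_r}, 0)` of size `p × m`. -/
def InfDiag (F : Type*) [Field F] (p m r : ℕ) (q : Fin r → ℤ) :
    Matrix (Fin p) (Fin m) (RatFunc F) :=
  Matrix.of fun i j =>
    if h : (i : ℕ) = (j : ℕ) ∧ (i : ℕ) < r then (RatFunc.X : RatFunc F) ^ (-(q ⟨i, h.2⟩)) else 0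

/-- `q` is the (monotone) tuple of invariant orders at infinity of `M`, i.e. `M` is equivalent
at infinity to the Smith–McMillan form at infinity with exponents `q`. -/
def HasInfOrders {p m r : ℕ} (M : Matrix (Fin p) (Fin m) (RatFunc F)) (q : Fin r → ℤ) : Prop :=
  Monotone q ∧
    ∃ (B₁ : Matrix (Fin p) (Fin p) (RatFunc F)) (B₂ : Matrix (Fin m) (Fin m) (RatFunc F)),
      Biproper B₁ ∧ Biproper B₂ ∧ B₁ * M * B₂ = InfDiag F p m r q

/-- The finite Smith–McMillan form `Diag(ε₁/ψ₁, …, ε_r/ψ_r, 0)` of size `p × m`. -/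
def SMDiag (p m r : ℕ) (ε ψ : Fin r → Polynomial F) : Matrix (Fin p) (Fin m) (RatFunc F) :=
  Matrix.of fun i j =>
    if h : (i : ℕ) = (j : ℕ) ∧ (i : ℕ) < r then
      algebraMap (Polynomial F) (RatFunc F) (ε ⟨i, h.2⟩) /
        algebraMap (Polynomial F) (RatFunc F) (ψ ⟨i, h.2⟩)
    else 0

/-!
Let `U₁ G U₂ = D_X` be the finite and `B₁ G B₂ = D_Y` the infinite Smith–McMillan form, with
nonsingular diagonal blocks `X` and `Y`. Then `D_X = C D_Y R` for `C = U₁ B₁⁻¹` and `R = B₂⁻¹ U₂`.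
Comparing blocks gives `C₂₁ = 0`, `R₁₂ = 0` and `X = C₁₁ Y R₁₁`. As determinants of unimodular and
of biproper matrices have degree `0` at infinity, so do `det C` and `det R`, whence
`deg det X = deg det Y - deg det C₂₂ - deg det R₂₂`.

The last columns of `U₂` and of `B₂` are a polynomial and a proper basis of the right null-space of
`G`, and `R₂₂` is the transition matrix between them. A proper left inverse of `B₂` turns bounds on
the column degrees of any polynomial basis into bounds on those of its coordinate matrix `R₂₂ W`,
with `W` polynomial, so its order is at least `deg det R₂₂`; reducing the columns of `R₂₂` by a
unimodular `W` attains this value. Hence `deg det R₂₂` is the sum of the right minimal indices, and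
dually `deg det C₂₂` is the sum of the left ones.
-/

section LeadingCoefficients

theorem coeff_prod_sum_of_natDegree_le {R ι : Type*} [CommSemiring R] (s : Finset ι)
    (f : ι → R[X]) (d : ι → ℕ) (h : ∀ i ∈ s, (f i).natDegree ≤ d i) :
    (∏ i ∈ s, f i).coeff (∑ i ∈ s, d i) = ∏ i ∈ s, (f i).coeff (d i) := by
  classical
  induction s using Finset.induction_on with
  | empty => simp
  | insert i s hi ih =>
    have hs : ∀ k ∈ s, (f k).natDegree ≤ d k := fun k hk => h k (Finset.mem_insert_of_mem hk)
    rw [Finset.prod_insert hi, Finset.sum_insert hi, Finset.prod_insert hi,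
      coeff_mul_add_eq_of_natDegree_le (h i (Finset.mem_insert_self i s))
        ((natDegree_prod_le s f).trans (Finset.sum_le_sum hs)), ih hs]

theorem coeff_det_sum_of_natDegree_le {R n : Type*} [CommRing R] [Fintype n] [DecidableEq n]
    (M : Matrix n n R[X]) (d : n → ℕ) (h : ∀ i j, (M i j).natDegree ≤ d j) :
    M.det.coeff (∑ j, d j) = (Matrix.of fun i j => (M i j).coeff (d j)).det := by
  simp only [det_apply, finsetSum_coeff, coeff_smul, of_apply]
  refine Finset.sum_congr rfl fun σ _ => ?_
  rw [coeff_prod_sum_of_natDegree_le Finset.univ (fun j => M (σ j) j) d fun j _ => h (σ j) j]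

theorem natDegree_le_colDegNat {a : Type*} [Fintype a] {l : ℕ} (N : Matrix a (Fin l) F[X])
    (i : a) (j : Fin l) : (N i j).natDegree ≤ colDegNat N j :=
  Finset.le_sup (f := fun i => (N i j).natDegree) (Finset.mem_univ i)

/-- The highest-column-degree coefficient matrix of `N`, whose nonsingularity characterizes the
column-reduced matrices among the square ones. -/
def leadingColCoeff {a : Type*} [Fintype a] {l : ℕ} (N : Matrix a (Fin l) F[X]) :
    Matrix a (Fin l) F :=
  Matrix.of fun i j => (N i j).coeff (colDegNat N j)

theorem coeff_det_matOrder {l : ℕ} (M : Matrix (Fin l) (Fin l) F[X]) :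
    M.det.coeff (matOrder M) = (leadingColCoeff M).det :=
  coeff_det_sum_of_natDegree_le M (colDegNat M) (natDegree_le_colDegNat M)

end LeadingCoefficients

section ColumnReduction

variable {a : Type*} [Fintype a] {l : ℕ}

theorem degree_mulVec_lt_of_leadingColCoeff_mulVec_eq_zero (N : Matrix a (Fin l) F[X])
    {c : Fin l → F} (hc : leadingColCoeff N *ᵥ c = 0) {D : ℕ}
    (hD : ∀ s, c s ≠ 0 → colDegNat N s ≤ D) (i : a) :
    ((N *ᵥ fun s => C (c s) * X ^ (D - colDegNat N s)) i).degree < D := by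
  have hterm (s : Fin l) : N i s * (C (c s) * X ^ (D - colDegNat N s)) =
      C (c s) * (N i s * X ^ (D - colDegNat N s)) := by ring
  rw [degree_lt_iff_coeff_zero]
  intro n hn
  simp only [mulVec, dotProduct, finsetSum_coeff, hterm, coeff_C_mul, coeff_mul_X_pow']
  rcases hn.eq_or_lt with rfl | hn
  · refine Eq.trans (Finset.sum_congr rfl fun s _ => ?_) (congrFun hc i)
    by_cases hs : c s = 0
    · simp [hs]
    · rw [if_pos (Nat.sub_le _ _), Nat.sub_sub_self (hD s hs), mul_comm]
      rfl
  · refine Finset.sum_eq_zero fun s _ => ?_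
    by_cases hs : c s = 0
    · simp [hs]
    · have hNs := natDegree_le_colDegNat N i s
      have hDs := hD s hs
      rw [if_pos (by omega), coeff_eq_zero_of_natDegree_lt (by omega), mul_zero]

theorem det_one_updateCol {n R : Type*} [Fintype n] [DecidableEq n] [CommRing R] (j : n)
    (b : n → R) : ((1 : Matrix n n R).updateCol j b).det = b j := by
  rw [← cramer_apply, cramer_one]
  rfl

theorem colDegNat_lt_of_degree_lt {N : Matrix a (Fin l) F[X]} {j : Fin l} {D : ℕ}
    (hN : ∃ i, N i j ≠ 0) (h : ∀ i, (N i j).degree < D) : colDegNat N j < D := by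
  obtain ⟨i₀, hi₀⟩ := hN
  have hlt (i : a) (hi : N i j ≠ 0) : (N i j).natDegree < D :=
    (natDegree_lt_iff_degree_lt hi).2 (h i)
  refine (Finset.sup_lt_iff (bot_le.trans_lt (hlt i₀ hi₀))).2 fun i _ => ?_
  by_cases hi : N i j = 0
  · simpa [hi] using bot_le.trans_lt (hlt i₀ hi₀)
  · exact hlt i hi

theorem matOrder_updateCol_lt {N : Matrix a (Fin l) F[X]} {j : Fin l} {v : a → F[X]}
    (hv : v ≠ 0) (h : ∀ i, (v i).degree < colDegNat N j) :
    matOrder (N.updateCol j v) < matOrder N := by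
  have hj : colDegNat (N.updateCol j v) j < colDegNat N j :=
    colDegNat_lt_of_degree_lt (by simpa using Function.ne_iff.1 hv) (by simpa using h)
  refine Finset.sum_lt_sum (fun k _ => ?_) ⟨j, Finset.mem_univ j, hj⟩
  rcases eq_or_ne k j with rfl | hk
  · exact hj.le
  · simp [colDegNat, updateCol_ne hk]

theorem exists_unimodular_matOrder_mul_lt {M : Matrix (Fin l) (Fin l) F[X]} (hM : M.det ≠ 0)
    (h : M.det.natDegree < matOrder M) :
    ∃ E : Matrix (Fin l) (Fin l) F[X], Unimodular E ∧ matOrder (M * E) < matOrder M := by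
  have hsing : (leadingColCoeff M).det = 0 := by
    rw [← coeff_det_matOrder, coeff_eq_zero_of_natDegree_lt h]
  classical
  obtain ⟨c, hc, hMc⟩ := exists_mulVec_eq_zero_iff.2 hsing
  obtain ⟨k, hk⟩ := Function.ne_iff.1 hc
  obtain ⟨j, hj, hmax⟩ := Finset.exists_max_image (Finset.univ.filter fun s => c s ≠ 0)
    (colDegNat M) ⟨k, by simpa using hk⟩
  simp only [Finset.mem_filter_univ] at hj hmax
  set b : Fin l → F[X] := fun s => C (c s) * X ^ (colDegNat M j - colDegNat M s) with hb
  have hbj : b j = C (c j) := by simp [hb]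
  have hMb : M *ᵥ b ≠ 0 := fun h0 => hM <| exists_mulVec_eq_zero_iff.1
    ⟨b, Function.ne_iff.2 ⟨j, by simpa [hbj] using hj⟩, h0⟩
  refine ⟨(1 : Matrix _ _ _).updateCol j b, ?_, ?_⟩
  · rw [Unimodular, det_one_updateCol, hbj]
    exact isUnit_C.2 hj.isUnit
  · rw [mul_updateCol, mul_one]
    exact matOrder_updateCol_lt hMb
      (degree_mulVec_lt_of_leadingColCoeff_mulVec_eq_zero M hMc hmax)

theorem Unimodular.mul {n : Type*} [Fintype n] [DecidableEq n] {U V : Matrix n n F[X]}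
    (hU : Unimodular U) (hV : Unimodular V) : Unimodular (U * V) := by
  simpa only [Unimodular, det_mul] using IsUnit.mul hU hV

theorem Unimodular.natDegree_det_mul {n : Type*} [Fintype n] [DecidableEq n]
    {W : Matrix n n F[X]} (hW : Unimodular W) (M : Matrix n n F[X]) :
    (M * W).det.natDegree = M.det.natDegree := by
  obtain ⟨u, hu, hW⟩ := Polynomial.isUnit_iff.1 hW
  rw [det_mul, ← hW, natDegree_mul_C_of_isUnit hu]

theorem exists_unimodular_matOrder_mul_le {M : Matrix (Fin l) (Fin l) F[X]} (hM : M.det ≠ 0) :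
    ∃ W : Matrix (Fin l) (Fin l) F[X], Unimodular W ∧ matOrder (M * W) ≤ M.det.natDegree := by
  obtain ⟨W, hW, hmin⟩ := exists_minimalFor_of_wellFoundedLT
    (Unimodular : Matrix (Fin l) (Fin l) F[X] → Prop) (fun W => matOrder (M * W))
    ⟨1, by simp [Unimodular]⟩
  refine ⟨W, hW, ?_⟩
  by_contra! hlt
  rw [← hW.natDegree_det_mul M] at hlt
  have hMW : (M * W).det ≠ 0 := by
    rw [det_mul]
    exact mul_ne_zero hM hW.ne_zero
  obtain ⟨E, hE, hlt'⟩ := exists_unimodular_matOrder_mul_lt hMW hlt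
  rw [Matrix.mul_assoc] at hlt'
  exact hlt'.not_ge (hmin (hW.mul hE) hlt'.le)

end ColumnReduction

section DegreesAtInfinity

theorem intDegree_sum_le {ι : Type*} (s : Finset ι) (f : ι → RatFunc F) {D : ℤ}
    (h : ∀ i ∈ s, f i ≠ 0 → (f i).intDegree ≤ D) (hs : ∑ i ∈ s, f i ≠ 0) :
    (∑ i ∈ s, f i).intDegree ≤ D := by
  classical
  induction s using Finset.induction_on with
  | empty => simp at hs
  | insert i s hi ih =>
    have ih := ih fun k hk => h k (Finset.mem_insert_of_mem hk)
    rw [Finset.sum_insert hi] at hs ⊢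
    have hfi := h i (Finset.mem_insert_self i s)
    by_cases hi0 : f i = 0
    · simp only [hi0, zero_add] at hs ⊢
      exact ih hs
    by_cases hs0 : ∑ k ∈ s, f k = 0
    · simp only [hs0, add_zero]
      exact hfi hi0
    · exact (RatFunc.intDegree_add_le hs0 hs).trans (max_le (hfi hi0) (ih hs0))

theorem intDegree_prod {ι : Type*} (s : Finset ι) (f : ι → RatFunc F) (h : ∀ i ∈ s, f i ≠ 0) :
    (∏ i ∈ s, f i).intDegree = ∑ i ∈ s, (f i).intDegree := by
  classical
  induction s using Finset.induction_on with
  | empty => simp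
  | insert i s hi ih =>
    have hs : ∀ k ∈ s, f k ≠ 0 := fun k hk => h k (Finset.mem_insert_of_mem hk)
    rw [Finset.prod_insert hi, Finset.sum_insert hi, RatFunc.intDegree_mul
      (h i (Finset.mem_insert_self i s)) (Finset.prod_ne_zero_iff.2 hs), ih hs]

theorem intDegree_pow {x : RatFunc F} (hx : x ≠ 0) (n : ℕ) :
    (x ^ n).intDegree = n * x.intDegree := by
  simpa using intDegree_prod (Finset.range n) (fun _ => x) fun _ _ => hx

theorem intDegree_zpow {x : RatFunc F} (hx : x ≠ 0) (n : ℤ) :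
    (x ^ n).intDegree = n * x.intDegree := by
  cases n with
  | ofNat n => simp [intDegree_pow hx]
  | negSucc n =>
    rw [zpow_negSucc, RatFunc.intDegree_inv, intDegree_pow hx, Int.negSucc_eq, neg_mul,
      Nat.cast_succ]

theorem intDegree_det_diagonal {n : Type*} [Fintype n] [DecidableEq n] (δ : n → RatFunc F)
    (h : ∀ i, δ i ≠ 0) : (diagonal δ).det.intDegree = ∑ i, (δ i).intDegree := by
  rw [det_diagonal, intDegree_prod _ _ fun i _ => h i]

theorem isProperRat_iff_intDegree_nonpos (x : RatFunc F) : IsProperRat x ↔ x.intDegree ≤ 0 := by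
  rcases eq_or_ne x 0 with rfl | hx
  · simp [IsProperRat]
  · rw [IsProperRat, RatFunc.intDegree, degree_eq_natDegree (RatFunc.num_ne_zero hx),
      degree_eq_natDegree x.denom_ne_zero, Nat.cast_le]
    omega

/-- The degree at infinity of every entry in column `j` of the rational matrix `A` is at most
`d j`. Zero entries are exempt: they have degree `-∞`, whereas `RatFunc.intDegree 0 = 0`. -/
def ColDegLE {a b : Type*} (A : Matrix a b (RatFunc F)) (d : b → ℤ) : Prop :=
  ∀ i j, A i j ≠ 0 → (A i j).intDegree ≤ d j

theorem ProperMat.colDegLE {a b : Type*} {A : Matrix a b (RatFunc F)} (hA : ProperMat A) :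
    ColDegLE A 0 :=
  fun i j _ => (isProperRat_iff_intDegree_nonpos _).1 (hA i j)

theorem ProperMat.colDegLE_mul {a b c : Type*} [Fintype b] {A : Matrix a b (RatFunc F)}
    {B : Matrix b c (RatFunc F)} {d : c → ℤ} (hA : ProperMat A) (hB : ColDegLE B d) :
    ColDegLE (A * B) d := by
  intro i j hij
  rw [mul_apply] at hij ⊢
  refine intDegree_sum_le _ _ (fun k _ hk => ?_) hij
  obtain ⟨hAk, hBk⟩ := mul_ne_zero_iff.1 hk
  rw [RatFunc.intDegree_mul hAk hBk]
  have hAdeg : (A i k).intDegree ≤ 0 := (isProperRat_iff_intDegree_nonpos _).1 (hA i k)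
  linarith [hB k j hBk]

theorem ColDegLE.intDegree_det_le {n : Type*} [Fintype n] [DecidableEq n]
    {A : Matrix n n (RatFunc F)} {d : n → ℤ} (hA : ColDegLE A d) (hdet : A.det ≠ 0) :
    A.det.intDegree ≤ ∑ j, d j := by
  rw [det_apply'] at hdet ⊢
  refine intDegree_sum_le _ _ (fun σ _ hσ => ?_) hdet
  have hprod : ∀ j ∈ Finset.univ, A (σ j) j ≠ 0 :=
    Finset.prod_ne_zero_iff.1 (right_ne_zero_of_mul hσ)
  have hsign : ((Equiv.Perm.sign σ : ℤ) : RatFunc F).intDegree = 0 := by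
    rcases Int.units_eq_one_or (Equiv.Perm.sign σ) with h | h <;> simp [h]
  rw [RatFunc.intDegree_mul (left_ne_zero_of_mul hσ) (right_ne_zero_of_mul hσ), hsign, zero_add,
    intDegree_prod _ _ hprod]
  exact Finset.sum_le_sum fun j hj => hA (σ j) j (hprod j hj)

theorem ProperMat.intDegree_det_nonpos {n : Type*} [Fintype n] [DecidableEq n]
    {A : Matrix n n (RatFunc F)} (hA : ProperMat A) (hdet : A.det ≠ 0) :
    A.det.intDegree ≤ 0 := by
  simpa using hA.colDegLE.intDegree_det_le hdet

theorem Biproper.det_ne_zero {n : Type*} [Fintype n] [DecidableEq n]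
    {B : Matrix n n (RatFunc F)} (hB : Biproper B) : B.det ≠ 0 := by
  obtain ⟨-, B', -, hBB', -⟩ := hB
  exact det_ne_zero_of_right_inverse hBB'

theorem Biproper.intDegree_det {n : Type*} [Fintype n] [DecidableEq n]
    {B : Matrix n n (RatFunc F)} (hB : Biproper B) : B.det.intDegree = 0 := by
  have hB₀ := hB.det_ne_zero
  obtain ⟨hBp, B', hBp', hBB', -⟩ := hB
  have hB'₀ : B'.det ≠ 0 := det_ne_zero_of_left_inverse hBB'
  have hsum : B.det.intDegree + B'.det.intDegree = 0 := by
    rw [← RatFunc.intDegree_mul hB₀ hB'₀, ← det_mul, hBB', det_one, RatFunc.intDegree_one]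
  linarith [hBp.intDegree_det_nonpos hB₀, hBp'.intDegree_det_nonpos hB'₀]

end DegreesAtInfinity

section PolynomialMatrices

theorem toRF_mul {a b c : Type*} [Fintype b] (A : Matrix a b F[X]) (B : Matrix b c F[X]) :
    toRF (A * B) = toRF A * toRF B :=
  Matrix.map_mul

theorem toRF_one {n : Type*} [DecidableEq n] : toRF (1 : Matrix n n F[X]) = 1 :=
  Matrix.map_one _ (map_zero _) (map_one _)

theorem det_toRF {n : Type*} [Fintype n] [DecidableEq n] (A : Matrix n n F[X]) :
    (toRF A).det = algebraMap F[X] (RatFunc F) A.det :=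
  (RingHom.map_det _ A).symm

theorem det_toRF_ne_zero {n : Type*} [Fintype n] [DecidableEq n] {A : Matrix n n F[X]} :
    (toRF A).det ≠ 0 ↔ A.det ≠ 0 := by
  rw [det_toRF, map_ne_zero_iff _ (RatFunc.algebraMap_injective F)]

theorem intDegree_det_toRF {n : Type*} [Fintype n] [DecidableEq n] (A : Matrix n n F[X]) :
    (toRF A).det.intDegree = A.det.natDegree := by
  rw [det_toRF, RatFunc.intDegree_polynomial]

theorem Unimodular.det_toRF_ne_zero {n : Type*} [Fintype n] [DecidableEq n] {U : Matrix n n F[X]}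
    (hU : Unimodular U) : (toRF U).det ≠ 0 :=
  _root_.det_toRF_ne_zero.2 hU.ne_zero

theorem Unimodular.intDegree_det_toRF {n : Type*} [Fintype n] [DecidableEq n]
    {U : Matrix n n F[X]} (hU : Unimodular U) : (toRF U).det.intDegree = 0 := by
  rw [_root_.intDegree_det_toRF, natDegree_eq_zero_of_isUnit hU, Nat.cast_zero]

theorem colDegLE_toRF {a : Type*} [Fintype a] {l : ℕ} (N : Matrix a (Fin l) F[X]) :
    ColDegLE (toRF N) fun j => colDegNat N j := by
  intro i j _
  rw [toRF, map_apply, RatFunc.intDegree_polynomial]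
  exact Nat.cast_le.2 (natDegree_le_colDegNat N i j)

theorem ColDegLE.matOrder_le {a : Type*} [Fintype a] {l : ℕ} {N : Matrix a (Fin l) F[X]}
    {d : Fin l → ℤ} (hd : ColDegLE (toRF N) d) (hN : ∀ j, ∃ i, N i j ≠ 0) :
    (matOrder N : ℤ) ≤ ∑ j, d j := by
  have hle (i : a) (j : Fin l) (hij : N i j ≠ 0) : ((N i j).natDegree : ℤ) ≤ d j := by
    simpa [toRF] using hd i j (by simpa [toRF] using hij)
  rw [matOrder, Nat.cast_sum]
  refine Finset.sum_le_sum fun j _ => ?_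
  obtain ⟨i₀, hi₀⟩ := hN j
  have hd₀ : 0 ≤ d j := (Int.natCast_nonneg _).trans (hle i₀ j hi₀)
  rw [← Int.le_toNat hd₀]
  refine Finset.sup_le fun i _ => ?_
  rw [Int.le_toNat hd₀]
  by_cases hij : N i j = 0
  · simpa [hij] using hd₀
  · exact hle i j hij

theorem exists_toRF_eq_smul {a b : Type*} [Finite a] [Finite b] (A : Matrix a b (RatFunc F)) :
    ∃ (p : F[X]) (M : Matrix a b F[X]), p ≠ 0 ∧ toRF M = algebraMap F[X] (RatFunc F) p • A := by
  obtain ⟨p, hp⟩ := IsLocalization.exist_integer_multiples_of_finite (nonZeroDivisors F[X])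
    fun ij : a × b => A ij.1 ij.2
  choose M hM using hp
  refine ⟨p, Matrix.of fun i j => M (i, j), nonZeroDivisors.coe_ne_zero p, ?_⟩
  ext i j
  simp [toRF, hM, Algebra.smul_def]

theorem exists_unimodular_colDegLE {l : ℕ} {A : Matrix (Fin l) (Fin l) (RatFunc F)}
    (hA : A.det ≠ 0) :
    ∃ (W : Matrix (Fin l) (Fin l) F[X]) (d : Fin l → ℤ), Unimodular W ∧
      ColDegLE (A * toRF W) d ∧ ∑ j, d j ≤ A.det.intDegree := by
  obtain ⟨p, M, hp, hM⟩ := exists_toRF_eq_smul A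
  set x := algebraMap F[X] (RatFunc F) p
  have hx₀ : x ≠ 0 := RatFunc.algebraMap_ne_zero hp
  have hdet : (toRF M).det = x ^ l * A.det := by rw [hM, det_smul, Fintype.card_fin]
  have hM₀ : M.det ≠ 0 := det_toRF_ne_zero.1 (hdet ▸ mul_ne_zero (pow_ne_zero l hx₀) hA)
  have hdeg : (M.det.natDegree : ℤ) = l * x.intDegree + A.det.intDegree := by
    rw [← intDegree_det_toRF, hdet, RatFunc.intDegree_mul (pow_ne_zero l hx₀) hA,
      intDegree_pow hx₀]
  obtain ⟨W, hW, hle⟩ := exists_unimodular_matOrder_mul_le hM₀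
  refine ⟨W, fun j => colDegNat (M * W) j - x.intDegree, hW, fun i j hij => ?_, ?_⟩
  · have hentry : toRF (M * W) i j = x * (A * toRF W) i j := by
      rw [toRF_mul, hM, smul_mul, Matrix.smul_apply, smul_eq_mul]
    have hMW := colDegLE_toRF (M * W) i j (hentry ▸ mul_ne_zero hx₀ hij)
    rw [hentry, RatFunc.intDegree_mul hx₀ hij] at hMW
    linarith
  · have hsum : (∑ j, (colDegNat (M * W) j : ℤ)) ≤ M.det.natDegree := by exact_mod_cast hle
    simp only [Finset.sum_sub_distrib, Finset.sum_const, Finset.card_univ, Fintype.card_fin,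
      nsmul_eq_mul]
    linarith

end PolynomialMatrices

section PolynomialBases

theorem det_ne_zero_of_mulVec_mul_injective {b n K : Type*} [Fintype n] [DecidableEq n] [Field K]
    {A : Matrix b n K} {Z : Matrix n n K} (h : Function.Injective (A * Z).mulVec) :
    Z.det ≠ 0 := by
  have hZ : Function.Injective Z.mulVec := fun x y hxy => h <| by
    simp only [← mulVec_mulVec, hxy]
  exact ((isUnit_iff_isUnit_det Z).1 (mulVec_injective_iff_isUnit.1 hZ)).ne_zero

variable {a b : Type*} [Fintype a] [Fintype b] {l : ℕ} {G : Matrix a b (RatFunc F)}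
  {K N : Matrix b (Fin l) F[X]}

theorem isRightPolyBasis_iff :
    IsRightPolyBasis G N ↔ Function.Injective (toRF N).mulVec ∧
      ∀ v, G *ᵥ v = 0 ↔ ∃ z, toRF N *ᵥ z = v := by
  have hrange : LinearMap.range (toRF N).mulVecLin =
      Submodule.span (RatFunc F) (Set.range fun j => (toRF N)ᵀ j) := range_mulVecLin _
  rw [IsRightPolyBasis, mulVec_injective_iff, ← hrange, eq_comm, SetLike.ext_iff]
  rfl

theorem IsRightPolyBasis.card_eq {l' : ℕ} {N' : Matrix b (Fin l') F[X]}
    (hN : IsRightPolyBasis G N) (hN' : IsRightPolyBasis G N') : l = l' := by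
  have h := finrank_span_eq_card hN.1
  rw [hN.2, ← hN'.2, finrank_span_eq_card hN'.1] at h
  simpa using h.symm

theorem IsRightPolyBasis.exists_ne_zero (hN : IsRightPolyBasis G N) (j : Fin l) :
    ∃ i, N i j ≠ 0 := by
  obtain ⟨i, hi⟩ := Function.ne_iff.1 (hN.1.ne_zero j)
  exact ⟨i, fun h => hi (by simp [toRF, h])⟩

theorem IsRightPolyBasis.mul (hN : IsRightPolyBasis G N) {W : Matrix (Fin l) (Fin l) F[X]}
    (hW : W.det ≠ 0) : IsRightPolyBasis G (N * W) := by
  obtain ⟨hinj, hker⟩ := isRightPolyBasis_iff.1 hN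
  have hWinj := mulVec_injective_of_det_ne_zero (det_toRF_ne_zero.2 hW)
  have hWsurj := mulVec_surjective_iff_isUnit.2 (mulVec_injective_iff_isUnit.1 hWinj)
  have hcomp : (toRF (N * W)).mulVec = (toRF N).mulVec ∘ (toRF W).mulVec := by
    funext z
    rw [toRF_mul, Function.comp_apply, mulVec_mulVec]
  refine isRightPolyBasis_iff.2 ⟨hcomp ▸ hinj.comp hWinj, fun v => ?_⟩
  rw [hker, hcomp]
  exact hWsurj.exists

theorem IsRightPolyBasis.exists_mul_eq (hK : IsRightPolyBasis G K) (hN : IsRightPolyBasis G N) :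
    ∃ Z : Matrix (Fin l) (Fin l) (RatFunc F), Z.det ≠ 0 ∧ toRF K * Z = toRF N := by
  obtain ⟨hNinj, hNker⟩ := isRightPolyBasis_iff.1 hN
  have hcol (j : Fin l) : ∃ z, toRF K *ᵥ z = (toRF N)ᵀ j :=
    ((isRightPolyBasis_iff.1 hK).2 _).1 ((hNker _).2 ⟨Pi.single j 1, mulVec_single_one _ j⟩)
  choose Z hZ using hcol
  have hKZ : toRF K * Matrix.of Zᵀ = toRF N := by
    ext i j
    exact congrFun (hZ j) i
  exact ⟨Zᵀ, det_ne_zero_of_mulVec_mul_injective (hKZ ▸ hNinj), hKZ⟩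

theorem IsRightPolyBasis.intDegree_det_mul_le (hK : IsRightPolyBasis G K)
    {K' : Matrix (Fin l) b F[X]} (hK' : K' * K = 1) {P' : Matrix (Fin l) b (RatFunc F)}
    (hP' : ProperMat P') (hdet : (P' * toRF K).det ≠ 0) (hN : IsRightPolyBasis G N) :
    (P' * toRF K).det.intDegree ≤ matOrder N := by
  obtain ⟨Z, hZ, hKZ⟩ := hK.exists_mul_eq hN
  have hZN : Z = toRF (K' * N) := by
    rw [toRF_mul, ← hKZ, ← Matrix.mul_assoc, ← toRF_mul, hK', toRF_one, Matrix.one_mul]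
  have hZdeg : 0 ≤ Z.det.intDegree := by
    rw [hZN, intDegree_det_toRF]
    exact Int.natCast_nonneg _
  have hPN : P' * toRF K * Z = P' * toRF N := by rw [Matrix.mul_assoc, hKZ]
  calc (P' * toRF K).det.intDegree
      ≤ (P' * toRF K).det.intDegree + Z.det.intDegree := le_add_of_nonneg_right hZdeg
    _ = (P' * toRF N).det.intDegree := by
      rw [← RatFunc.intDegree_mul hdet hZ, ← det_mul, hPN]
    _ ≤ ∑ j, (colDegNat N j : ℤ) := by
      refine (hP'.colDegLE_mul (colDegLE_toRF N)).intDegree_det_le ?_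
      rw [← hPN, det_mul]
      exact mul_ne_zero hdet hZ
    _ = matOrder N := (Nat.cast_sum _ _).symm

theorem IsRightPolyBasis.exists_matOrder_le (hK : IsRightPolyBasis G K)
    {P : Matrix b (Fin l) (RatFunc F)} (hP : ProperMat P)
    {A : Matrix (Fin l) (Fin l) (RatFunc F)} (hA : A.det ≠ 0) (hPA : P * A = toRF K) :
    ∃ N : Matrix b (Fin l) F[X], IsRightPolyBasis G N ∧ (matOrder N : ℤ) ≤ A.det.intDegree := by
  obtain ⟨W, d, hW, hd, hsum⟩ := exists_unimodular_colDegLE hA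
  have hKW : IsRightPolyBasis G (K * W) := hK.mul hW.ne_zero
  have hdeg : ColDegLE (toRF (K * W)) d := by
    rw [toRF_mul, ← hPA, Matrix.mul_assoc]
    exact hP.colDegLE_mul hd
  exact ⟨K * W, hKW, (hdeg.matOrder_le hKW.exists_ne_zero).trans hsum⟩

theorem HasRightMinimalIndices.sum_eq_intDegree_det {s : Multiset ℕ}
    (hs : HasRightMinimalIndices G s) (hK : IsRightPolyBasis G K)
    {K' : Matrix (Fin l) b F[X]} (hK' : K' * K = 1) {P : Matrix b (Fin l) (RatFunc F)}
    (hP : ProperMat P) {P' : Matrix (Fin l) b (RatFunc F)} (hP' : ProperMat P')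
    (hPK : P * (P' * toRF K) = toRF K) :
    (s.sum : ℤ) = (P' * toRF K).det.intDegree := by
  obtain ⟨l', N, ⟨hN, hmin⟩, rfl⟩ := hs
  obtain rfl := hK.card_eq hN
  have hdet : (P' * toRF K).det ≠ 0 :=
    det_ne_zero_of_mulVec_mul_injective (hPK ▸ (isRightPolyBasis_iff.1 hK).1)
  obtain ⟨N', hN', hle⟩ := hK.exists_matOrder_le hP hdet hPK
  refine le_antisymm ((Nat.cast_le.2 (hmin l N' hN')).trans hle) ?_
  exact hK.intDegree_det_mul_le hK' hP' hdet hN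

end PolynomialBases

section Transposition

variable {a b : Type*} [Fintype a] [Fintype b] {G : Matrix a b (RatFunc F)}

theorem isLeftPolyBasis_iff_transpose {l : ℕ} {N : Matrix a (Fin l) F[X]} :
    IsLeftPolyBasis G N ↔ IsRightPolyBasis Gᵀ N := by
  have hker : LinearMap.ker Gᵀ.mulVecLin = LinearMap.ker G.vecMulLinear := by
    ext v
    simp only [LinearMap.mem_ker, mulVecLin_apply, mulVec_transpose, vecMulLinear_apply]
  rw [IsLeftPolyBasis, IsRightPolyBasis, hker]

theorem hasLeftMinimalIndices_iff_transpose {s : Multiset ℕ} :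
    HasLeftMinimalIndices G s ↔ HasRightMinimalIndices Gᵀ s := by
  simp only [HasLeftMinimalIndices, HasRightMinimalIndices, IsLeftMinimalBasis,
    IsRightMinimalBasis, isLeftPolyBasis_iff_transpose]

theorem toRF_transpose {a b : Type*} (M : Matrix a b F[X]) : toRF Mᵀ = (toRF M)ᵀ :=
  rfl

theorem Unimodular.transpose {n : Type*} [Fintype n] [DecidableEq n] {U : Matrix n n F[X]}
    (hU : Unimodular U) : Unimodular Uᵀ := by
  rwa [Unimodular, det_transpose]

theorem ProperMat.transpose {a b : Type*} {A : Matrix a b (RatFunc F)} (hA : ProperMat A) :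
    ProperMat Aᵀ :=
  fun i j => hA j i

end Transposition

section BlockForm

theorem toBlocks_of_mul_fromBlocks_mul {ρ κ ι K : Type*} [Fintype ρ] [DecidableEq ρ] [Fintype κ]
    [Fintype ι] [Field K] {C : Matrix (ρ ⊕ κ) (ρ ⊕ κ) K} {R : Matrix (ρ ⊕ ι) (ρ ⊕ ι) K}
    {X Y : Matrix ρ ρ K} (hX : X.det ≠ 0)
    (h : C * (fromBlocks Y 0 0 0 : Matrix (ρ ⊕ κ) (ρ ⊕ ι) K) * R = fromBlocks X 0 0 0) :
    C.toBlocks₁₁ * Y * R.toBlocks₁₁ = X ∧ R.toBlocks₁₂ = 0 ∧ C.toBlocks₂₁ = 0 := by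
  rw [← fromBlocks_toBlocks C, ← fromBlocks_toBlocks R, fromBlocks_multiply, fromBlocks_multiply]
    at h
  simp only [Matrix.mul_zero, Matrix.zero_mul, add_zero, fromBlocks_inj] at h
  obtain ⟨h₁₁, h₁₂, h₂₁, -⟩ := h
  refine ⟨h₁₁, ?_, ?_⟩
  · have hCY : IsUnit (C.toBlocks₁₁ * Y).det := by
      rw [← h₁₁, det_mul] at hX
      exact (left_ne_zero_of_mul hX).isUnit
    rw [← nonsing_inv_mul_cancel_left _ R.toBlocks₁₂ hCY, h₁₂, Matrix.mul_zero]
  · have hYR : IsUnit (Y * R.toBlocks₁₁).det := by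
      rw [← h₁₁, Matrix.mul_assoc, det_mul] at hX
      exact (right_ne_zero_of_mul hX).isUnit
    rw [← mul_nonsing_inv_cancel_right _ C.toBlocks₂₁ hYR, ← Matrix.mul_assoc, h₂₁,
      Matrix.zero_mul]

theorem fromBlocks_mulVec_eq_zero_iff {ρ κ ι K : Type*} [Fintype ρ] [DecidableEq ρ] [Fintype ι]
    [Field K] {X : Matrix ρ ρ K} (hX : X.det ≠ 0) (w : ρ ⊕ ι → K) :
    (fromBlocks X 0 0 0 : Matrix (ρ ⊕ κ) (ρ ⊕ ι) K) *ᵥ w = 0 ↔ w ∘ Sum.inl = 0 := by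
  simp only [fromBlocks_mulVec, zero_mulVec, add_zero]
  refine ⟨fun h => mulVec_injective_of_det_ne_zero hX ?_, fun h => ?_⟩
  · rw [mulVec_zero]
    exact funext fun i => congrFun h (Sum.inl i)
  · rw [h, mulVec_zero, Sum.elim_zero_zero]

theorem submatrix_inr_mulVec {b ρ ι K : Type*} [Fintype b] [Finite ρ] [Fintype ι] [Semiring K]
    (A : Matrix b b K) (e : ρ ⊕ ι ≃ b) (z : ι → K) :
    A.submatrix id (e ∘ Sum.inr) *ᵥ z = A *ᵥ (Sum.elim 0 z ∘ e.symm) := by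
  have := Fintype.ofFinite ρ
  rw [← Function.comp_id (A *ᵥ _), ← submatrix_mulVec_equiv]
  ext i
  simp [mulVec, dotProduct]

theorem submatrix_id_inr_mul_toBlocks₂₂ {b ρ ι K : Type*} [Fintype b] [Finite ρ] [Fintype ι]
    [Semiring K] (B A : Matrix b b K) (e : ρ ⊕ ι ≃ b) (h : (A.submatrix e e).toBlocks₁₂ = 0) :
    B.submatrix id (e ∘ Sum.inr) * (A.submatrix e e).toBlocks₂₂ =
      (B * A).submatrix id (e ∘ Sum.inr) := by
  have := Fintype.ofFinite ρ
  ext i j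
  have hzero (k : ρ) : A (e (Sum.inl k)) (e (Sum.inr j)) = 0 := congrFun (congrFun h k) j
  simp only [mul_apply, submatrix_apply, toBlocks₂₂, of_apply, id, Function.comp_apply,
    ← e.sum_comp, Fintype.sum_sum_type, hzero, mul_zero, Finset.sum_const_zero, zero_add]

theorem intDegree_det_toBlocks₁₁_of_toBlocks₁₂_eq_zero {ρ ι : Type*} [Fintype ρ] [DecidableEq ρ]
    [Fintype ι] [DecidableEq ι] {R : Matrix (ρ ⊕ ι) (ρ ⊕ ι) (RatFunc F)} (hR : R.toBlocks₁₂ = 0)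
    (hdet : R.det ≠ 0) :
    R.toBlocks₁₁.det.intDegree = R.det.intDegree - R.toBlocks₂₂.det.intDegree := by
  have hmul : R.det = R.toBlocks₁₁.det * R.toBlocks₂₂.det := by
    rw [← det_fromBlocks_zero₁₂ _ R.toBlocks₂₁, ← hR, fromBlocks_toBlocks]
  rw [hmul] at hdet ⊢
  rw [RatFunc.intDegree_mul (left_ne_zero_of_mul hdet) (right_ne_zero_of_mul hdet),
    add_sub_cancel_right]

variable {a b ρ κ : Type*} [Fintype a] [Fintype b] [DecidableEq b] {l : ℕ}
  {G : Matrix a b (RatFunc F)}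

theorem HasRightMinimalIndices.sum_eq_intDegree_det_toBlocks₂₂ [Finite ρ] {s : Multiset ℕ}
    (hs : HasRightMinimalIndices G s) {U : Matrix b b F[X]} (hU : Unimodular U)
    {B B' : Matrix b b (RatFunc F)} (hB : ProperMat B) (hB' : ProperMat B') (hBB' : B * B' = 1)
    (e : ρ ⊕ Fin l ≃ b) (hK : IsRightPolyBasis G (U.submatrix id (e ∘ Sum.inr)))
    (h₁₂ : ((B' * toRF U).submatrix e e).toBlocks₁₂ = 0) :
    (s.sum : ℤ) = ((B' * toRF U).submatrix e e).toBlocks₂₂.det.intDegree := by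
  have hblock : B'.submatrix (e ∘ Sum.inr) id * toRF (U.submatrix id (e ∘ Sum.inr)) =
      ((B' * toRF U).submatrix e e).toBlocks₂₂ :=
    (submatrix_mul B' (toRF U) (e ∘ Sum.inr) id (e ∘ Sum.inr) Function.bijective_id).symm
  have hleftInv : U⁻¹.submatrix (e ∘ Sum.inr) id * U.submatrix id (e ∘ Sum.inr) = 1 := by
    rw [← submatrix_mul _ _ _ id _ Function.bijective_id, nonsing_inv_mul _ hU,
      submatrix_one _ (e.injective.comp Sum.inr_injective)]
  rw [← hblock]
  refine hs.sum_eq_intDegree_det hK hleftInv (P := B.submatrix id (e ∘ Sum.inr))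
    (fun i j => hB i _) (fun i j => hB' _ j) ?_
  rw [hblock, submatrix_id_inr_mul_toBlocks₂₂ B _ e h₁₂, ← Matrix.mul_assoc, hBB',
    Matrix.one_mul]
  rfl

variable [DecidableEq a] [Fintype ρ] [DecidableEq ρ]

theorem isRightPolyBasis_submatrix_inr {L : Matrix a a (RatFunc F)} (hL : L.det ≠ 0)
    {U : Matrix b b F[X]} (hU : U.det ≠ 0) {X : Matrix ρ ρ (RatFunc F)} (hX : X.det ≠ 0)
    (e₁ : ρ ⊕ κ ≃ a) (e₂ : ρ ⊕ Fin l ≃ b)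
    (h : (L * G * toRF U).submatrix e₁ e₂ = fromBlocks X 0 0 0) :
    IsRightPolyBasis G (U.submatrix id (e₂ ∘ Sum.inr)) := by
  have hLinj : Function.Injective fun w => (L *ᵥ w) ∘ e₁ :=
    e₁.surjective.injective_comp_right.comp (mulVec_injective_of_det_ne_zero hL)
  have hUinj := mulVec_injective_of_det_ne_zero (det_toRF_ne_zero.2 hU)
  have hUsurj := mulVec_surjective_iff_isUnit.2 (mulVec_injective_iff_isUnit.1 hUinj)
  have hcol (z : Fin l → RatFunc F) : toRF (U.submatrix id (e₂ ∘ Sum.inr)) *ᵥ z =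
      toRF U *ᵥ (Sum.elim 0 z ∘ e₂.symm) := submatrix_inr_mulVec (toRF U) e₂ z
  have hker (y : b → RatFunc F) : G *ᵥ toRF U *ᵥ y = 0 ↔ (y ∘ e₂) ∘ Sum.inl = 0 := by
    rw [← fromBlocks_mulVec_eq_zero_iff (κ := κ) hX, ← h, submatrix_mulVec_equiv,
      Function.comp_assoc, e₂.self_comp_symm, Function.comp_id, ← mulVec_mulVec, ← mulVec_mulVec]
    exact (hLinj.eq_iff' (by simp only [mulVec_zero, Pi.zero_comp])).symm
  refine isRightPolyBasis_iff.2 ⟨fun z z' hz => ?_, fun v => ?_⟩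
  · rw [hcol, hcol] at hz
    exact Sum.elim_injective' (e₂.symm.surjective.injective_comp_right (hUinj hz))
  · obtain ⟨y, rfl⟩ := hUsurj v
    simp only [hker, hcol, hUinj.eq_iff, Equiv.comp_symm_eq]
    constructor
    · intro hy
      exact ⟨(y ∘ e₂) ∘ Sum.inr, by rw [← hy, Sum.elim_comp_inl_inr]⟩
    · rintro ⟨z, hz⟩
      rw [← hz, Sum.elim_comp_inl]

theorem HasRightMinimalIndices.intDegree_det_toBlocks₁₁ {s : Multiset ℕ}
    (hs : HasRightMinimalIndices G s) {L : Matrix a a (RatFunc F)} (hL : L.det ≠ 0)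
    {U : Matrix b b F[X]} (hU : Unimodular U) {B B' : Matrix b b (RatFunc F)} (hB : ProperMat B)
    (hB' : ProperMat B') (hBB' : B * B' = 1) {X : Matrix ρ ρ (RatFunc F)} (hX : X.det ≠ 0)
    (e₁ : ρ ⊕ κ ≃ a) (e₂ : ρ ⊕ Fin l ≃ b)
    (h : (L * G * toRF U).submatrix e₁ e₂ = fromBlocks X 0 0 0)
    (h₁₂ : ((B' * toRF U).submatrix e₂ e₂).toBlocks₁₂ = 0) :
    ((B' * toRF U).submatrix e₂ e₂).toBlocks₁₁.det.intDegree = -(s.sum : ℤ) := by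
  have hB'bi : Biproper B' := ⟨hB', B, hB, mul_eq_one_comm.1 hBB', hBB'⟩
  have hdet : ((B' * toRF U).submatrix e₂ e₂).det = B'.det * (toRF U).det := by
    rw [det_submatrix_equiv_self, det_mul]
  rw [intDegree_det_toBlocks₁₁_of_toBlocks₁₂_eq_zero h₁₂
      (hdet ▸ mul_ne_zero hB'bi.det_ne_zero hU.det_toRF_ne_zero), hdet,
    RatFunc.intDegree_mul hB'bi.det_ne_zero hU.det_toRF_ne_zero, hB'bi.intDegree_det,
    hU.intDegree_det_toRF, add_zero, zero_sub, ← hs.sum_eq_intDegree_det_toBlocks₂₂ hU hB hB' hBB'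
      e₂ (isRightPolyBasis_submatrix_inr hL hU.ne_zero hX e₁ e₂ h) h₁₂]

theorem HasLeftMinimalIndices.intDegree_det_toBlocks₁₁ {ι : Type*} {k : ℕ} {s : Multiset ℕ}
    (hs : HasLeftMinimalIndices G s) {L : Matrix b b (RatFunc F)} (hL : L.det ≠ 0)
    {U : Matrix a a F[X]} (hU : Unimodular U) {B B' : Matrix a a (RatFunc F)} (hB : ProperMat B)
    (hB' : ProperMat B') (hB'B : B' * B = 1) {X : Matrix ρ ρ (RatFunc F)} (hX : X.det ≠ 0)
    (e₁ : ρ ⊕ Fin k ≃ a) (e₂ : ρ ⊕ ι ≃ b)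
    (h : (toRF U * G * L).submatrix e₁ e₂ = fromBlocks X 0 0 0)
    (h₂₁ : ((toRF U * B').submatrix e₁ e₁).toBlocks₂₁ = 0) :
    ((toRF U * B').submatrix e₁ e₁).toBlocks₁₁.det.intDegree = -(s.sum : ℤ) := by
  have hT : (B'ᵀ * toRF Uᵀ).submatrix e₁ e₁ = ((toRF U * B').submatrix e₁ e₁)ᵀ := by
    rw [transpose_submatrix, transpose_mul, toRF_transpose]
  have hGT : (Lᵀ * Gᵀ * toRF Uᵀ).submatrix e₂ e₁ = fromBlocks Xᵀ 0 0 0 := by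
    simpa only [fromBlocks_transpose, transpose_submatrix, transpose_mul, transpose_zero,
      Matrix.mul_assoc, toRF_transpose] using congrArg transpose h
  have hmain := (hasLeftMinimalIndices_iff_transpose.1 hs).intDegree_det_toBlocks₁₁
    (by rwa [det_transpose]) hU.transpose hB.transpose hB'.transpose
    (by rw [← transpose_mul, hB'B, transpose_one]) (by rwa [det_transpose]) e₂ e₁ hGT
    (hT ▸ congrArg transpose h₂₁)
  rw [hT] at hmain
  exact (congrArg RatFunc.intDegree (det_transpose _)).symm.trans hmain

theorem sum_minimalIndices_eq_intDegree_det_sub {k : ℕ} {sr sl : Multiset ℕ}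
    (hsr : HasRightMinimalIndices G sr) (hsl : HasLeftMinimalIndices G sl)
    {U₁ : Matrix a a F[X]} {U₂ : Matrix b b F[X]} (hU₁ : Unimodular U₁) (hU₂ : Unimodular U₂)
    {B₁ : Matrix a a (RatFunc F)} {B₂ : Matrix b b (RatFunc F)}
    (hB₁ : Biproper B₁) (hB₂ : Biproper B₂) (e₁ : ρ ⊕ Fin k ≃ a) (e₂ : ρ ⊕ Fin l ≃ b)
    {X Y : Matrix ρ ρ (RatFunc F)} (hX : X.det ≠ 0)
    (hGX : (toRF U₁ * G * toRF U₂).submatrix e₁ e₂ = fromBlocks X 0 0 0)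
    (hGY : (B₁ * G * B₂).submatrix e₁ e₂ = fromBlocks Y 0 0 0) :
    (sr.sum : ℤ) + sl.sum = Y.det.intDegree - X.det.intDegree := by
  obtain ⟨hB₁p, B₁', hB₁p', -, hB₁'B₁⟩ := hB₁
  obtain ⟨hB₂p, B₂', hB₂p', hB₂B₂', -⟩ := hB₂
  have hassoc : toRF U₁ * G * toRF U₂ =
      toRF U₁ * B₁' * (B₁ * G * B₂) * (B₂' * toRF U₂) := by
    calc toRF U₁ * G * toRF U₂
        = toRF U₁ * (B₁' * B₁) * G * (B₂ * B₂') * toRF U₂ := by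
          rw [hB₁'B₁, hB₂B₂', Matrix.mul_one, Matrix.mul_one]
      _ = toRF U₁ * B₁' * (B₁ * G * B₂) * (B₂' * toRF U₂) := by simp only [Matrix.mul_assoc]
  have hCYR : (toRF U₁ * B₁').submatrix e₁ e₁ *
      (fromBlocks Y 0 0 0 : Matrix (ρ ⊕ Fin k) (ρ ⊕ Fin l) _) *
      (B₂' * toRF U₂).submatrix e₂ e₂ = fromBlocks X 0 0 0 := by
    rw [← hGX, ← hGY, submatrix_mul_equiv, submatrix_mul_equiv, hassoc]
  obtain ⟨hX_eq, hR₁₂, hC₂₁⟩ := toBlocks_of_mul_fromBlocks_mul hX hCYR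
  have hR := hsr.intDegree_det_toBlocks₁₁ hU₁.det_toRF_ne_zero hU₂ hB₂p hB₂p' hB₂B₂' hX e₁ e₂
    hGX hR₁₂
  have hC := hsl.intDegree_det_toBlocks₁₁ hU₂.det_toRF_ne_zero hU₁ hB₁p hB₁p' hB₁'B₁ hX e₁ e₂
    hGX hC₂₁
  rw [← hX_eq, det_mul, det_mul] at hX ⊢
  obtain ⟨hCY, hR₁₁⟩ := mul_ne_zero_iff.1 hX
  obtain ⟨hC₁₁, hY⟩ := mul_ne_zero_iff.1 hCY
  rw [RatFunc.intDegree_mul hCY hR₁₁, RatFunc.intDegree_mul hC₁₁ hY, hR, hC]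
  ring

end BlockForm

section DiagonalForms

theorem submatrix_finSumFinEquiv_rectDiagonal {K : Type*} [Zero K] (r k l : ℕ) (δ : Fin r → K) :
    (Matrix.of fun (i : Fin (r + k)) (j : Fin (r + l)) =>
      if h : (i : ℕ) = (j : ℕ) ∧ (i : ℕ) < r then δ ⟨i, h.2⟩ else 0).submatrix
        finSumFinEquiv finSumFinEquiv = fromBlocks (diagonal δ) 0 0 0 := by
  ext (i | i) (j | j)
  · by_cases hij : i = j <;> simp [hij, Fin.val_inj]
  · have hij : (i : ℕ) ≠ r + j := by omega
    simp [hij]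
  · simp
  · simp

theorem SMDiag_submatrix_finSumFinEquiv (r k l : ℕ) (ε ψ : Fin r → F[X]) :
    (SMDiag (r + k) (r + l) r ε ψ).submatrix finSumFinEquiv finSumFinEquiv =
      fromBlocks (diagonal fun i => algebraMap F[X] (RatFunc F) (ε i) /
        algebraMap F[X] (RatFunc F) (ψ i)) 0 0 0 :=
  submatrix_finSumFinEquiv_rectDiagonal r k l
    fun i => algebraMap F[X] (RatFunc F) (ε i) / algebraMap F[X] (RatFunc F) (ψ i)

theorem InfDiag_submatrix_finSumFinEquiv (r k l : ℕ) (q : Fin r → ℤ) :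
    (InfDiag F (r + k) (r + l) r q).submatrix finSumFinEquiv finSumFinEquiv =
      fromBlocks (diagonal fun i => RatFunc.X ^ (-q i)) 0 0 0 :=
  submatrix_finSumFinEquiv_rectDiagonal r k l fun i => RatFunc.X ^ (-q i)

theorem index_sum_theorem_general
    {p m r : ℕ} (hp : r ≤ p) (hm : r ≤ m)
    (G : Matrix (Fin p) (Fin m) (RatFunc F))
    (ε ψ : Fin r → Polynomial F) (hε : ∀ i, ε i ≠ 0) (hψ : ∀ i, ψ i ≠ 0)
    (U₁ : Matrix (Fin p) (Fin p) (Polynomial F))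
    (U₂ : Matrix (Fin m) (Fin m) (Polynomial F))
    (hU₁ : Unimodular U₁) (hU₂ : Unimodular U₂)
    (hSM : toRF U₁ * G * toRF U₂ = SMDiag p m r ε ψ)
    (q : Fin r → ℤ)
    (B₁ : Matrix (Fin p) (Fin p) (RatFunc F))
    (B₂ : Matrix (Fin m) (Fin m) (RatFunc F))
    (hB₁ : Biproper B₁) (hB₂ : Biproper B₂)
    (hInf : B₁ * G * B₂ = InfDiag F p m r q)
    (sr sl : Multiset ℕ)
    (hsr : HasRightMinimalIndices G sr)
    (hsl : HasLeftMinimalIndices G sl) :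
    ((sr.sum : ℤ) + (sl.sum : ℤ)) =
      (∑ i, ((ψ i).natDegree : ℤ)) - (∑ i, ((ε i).natDegree : ℤ)) - ∑ i, q i := by
  obtain ⟨k, rfl⟩ := Nat.exists_eq_add_of_le hp
  obtain ⟨l, rfl⟩ := Nat.exists_eq_add_of_le hm
  have hε' (i : Fin r) := RatFunc.algebraMap_ne_zero (hε i)
  have hψ' (i : Fin r) := RatFunc.algebraMap_ne_zero (hψ i)
  have hX (i : Fin r) : algebraMap F[X] (RatFunc F) (ε i) / algebraMap F[X] (RatFunc F) (ψ i) ≠ 0 :=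
    div_ne_zero (hε' i) (hψ' i)
  have hXdet : (diagonal fun i => algebraMap F[X] (RatFunc F) (ε i) /
      algebraMap F[X] (RatFunc F) (ψ i)).det ≠ 0 := by
    rw [det_diagonal]
    exact Finset.prod_ne_zero_iff.2 fun i _ => hX i
  rw [sum_minimalIndices_eq_intDegree_det_sub hsr hsl hU₁ hU₂ hB₁ hB₂ finSumFinEquiv
    finSumFinEquiv hXdet (hSM ▸ SMDiag_submatrix_finSumFinEquiv r k l ε ψ)
    (hInf ▸ InfDiag_submatrix_finSumFinEquiv r k l q),
    intDegree_det_diagonal _ hX,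
    intDegree_det_diagonal _ fun i => zpow_ne_zero _ RatFunc.X_ne_zero]
  simp only [RatFunc.intDegree_div (hε' _) (hψ' _), RatFunc.intDegree_polynomial,
    intDegree_zpow RatFunc.X_ne_zero, RatFunc.intDegree_X, Finset.sum_sub_distrib, mul_one,
    Finset.sum_neg_distrib]
  ring

end DiagonalForms

/-- **Van Dooren's index sum theorem, reformulated.** If `G` has normal rank
`r`, finite Smith–McMillan form `Diag(ε₁/ψ₁, …, ε_r/ψ_r, 0)` and invariant orders at infinity
`q₁ ≤ … ≤ q_r`, then the sum `μ(G)` of all right and left minimal indices of `G` equals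
`Σ deg ψᵢ − Σ deg εᵢ − Σ qᵢ`. -/
theorem index_sum_theorem
    {p m r : ℕ}
    (G : Matrix (Fin p) (Fin m) (RatFunc F))
    (hrank : G.rank = r)
    (ε ψ : Fin r → Polynomial F)
    (hεmonic : ∀ i, (ε i).Monic) (hψmonic : ∀ i, (ψ i).Monic)
    (hcop : ∀ i, IsCoprime (ε i) (ψ i))
    (hεdvd : ∀ i j : Fin r, i ≤ j → ε i ∣ ε j)
    (hψdvd : ∀ i j : Fin r, i ≤ j → ψ j ∣ ψ i)
    (U₁ : Matrix (Fin p) (Fin p) (Polynomial F))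
    (U₂ : Matrix (Fin m) (Fin m) (Polynomial F))
    (hU₁ : Unimodular U₁) (hU₂ : Unimodular U₂)
    (hSM : toRF U₁ * G * toRF U₂ = SMDiag p m r ε ψ)
    (q : Fin r → ℤ)
    (hq : HasInfOrders G q)
    (sr sl : Multiset ℕ)
    (hsr : HasRightMinimalIndices G sr)
    (hsl : HasLeftMinimalIndices G sl) :
    ((sr.sum : ℤ) + (sl.sum : ℤ)) =
      (∑ i, ((ψ i).natDegree : ℤ)) - (∑ i, ((ε i).natDegree : ℤ)) - ∑ i, q i := by
  obtain ⟨-, B₁, B₂, hB₁, hB₂, hInf⟩ := hq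
  exact index_sum_theorem_general (hrank ▸ G.rank_le_height) (hrank ▸ G.rank_le_width) G ε ψ
    (fun i => (hεmonic i).ne_zero) (fun i => (hψmonic i).ne_zero) U₁ U₂ hU₁ hU₂ hSM q B₁ B₂
    hB₁ hB₂ hInf sr sl hsr hsl

end
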